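/- arXiv:0904.4199 — 3 statements merged into one kernel-verified Lean document; each statement's English description precedes it below -/
import Mathlib

section
/- Let L > 0 and let f : (−L, L) → ℝ be a measurable function with 0 ≤ sign(ξ)·f(ξ) ≤ 1 for a.e. ξ. Then for every convex continuously differentiable function φ : ℝ → ℝ, one has ∫_{−L}^{L} φ'(ξ) · (𝓜f(ξ) − f(ξ)) dξ ≤ 0. -/
/-!
Write `u = ∫ f`. The sign bounds on `f` force `|u| ≤ L`, so `M(u, ·)` has the same integral `u` over
`(-L, L)` as `f` (`integral_Mfun`), and subtracting the constant `φ'(u)` from `φ'` does not change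
the integral in question. It remains to integrate the pointwise inequality
`(φ'(ξ) - φ'(u)) * (M(u, ξ) - f ξ) ≤ 0`: for `ξ > u` the first factor is nonnegative since `φ'` is
monotone, and `M(u, ξ)` is the least value allowed for `f ξ`; for `ξ < u` both signs flip
(`Mfun_le_of_lt`, `le_Mfun_of_lt`).
-/

open MeasureTheory Set Filter

/-- The Maxwellian `M(u, ξ)`: equals `1` on `0 < ξ < u`, `-1` on `u < ξ < 0`, `0` otherwise. -/
noncomputable def Mfun (u ξ : ℝ) : ℝ :=
  if 0 < ξ ∧ ξ < u then 1 else if u < ξ ∧ ξ < 0 then -1 else 0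

/-- The projection `𝓜 f = M(u_f, ·)` with `u_f = ∫_{-L}^{L} f`. -/
noncomputable def proj (L : ℝ) (f : ℝ → ℝ) (ξ : ℝ) : ℝ :=
  Mfun (∫ ζ in (-L)..L, f ζ) ξ

lemma Mfun_le_of_lt {u ξ y : ℝ} (h0 : ξ ≠ 0) (h : u < ξ)
    (hy : 0 ≤ Real.sign ξ * y ∧ Real.sign ξ * y ≤ 1) : Mfun u ξ ≤ y := by
  unfold Mfun
  rcases lt_or_gt_of_ne h0 with hξ | hξ
  · rw [Real.sign_of_neg hξ] at hy
    simp only [hξ, h, not_lt.2 hξ.le, false_and, and_self, if_true, if_false]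
    linarith [hy.2]
  · rw [Real.sign_of_pos hξ] at hy
    simp only [not_lt.2 hξ.le, not_lt.2 h.le, and_false, if_false]
    linarith [hy.1]

lemma le_Mfun_of_lt {u ξ y : ℝ} (h0 : ξ ≠ 0) (h : ξ < u)
    (hy : 0 ≤ Real.sign ξ * y ∧ Real.sign ξ * y ≤ 1) : y ≤ Mfun u ξ := by
  unfold Mfun
  rcases lt_or_gt_of_ne h0 with hξ | hξ
  · rw [Real.sign_of_neg hξ] at hy
    simp only [not_lt.2 hξ.le, not_lt.2 h.le, false_and, if_false]
    linarith [hy.1]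
  · rw [Real.sign_of_pos hξ] at hy
    simp only [hξ, h, and_self, if_true]
    linarith [hy.2]

lemma Mfun_eq_indicator (u : ℝ) : Mfun u =
    fun ξ => (Ioo 0 u).indicator (fun _ => (1 : ℝ)) ξ - (Ioo u 0).indicator (fun _ => (1 : ℝ)) ξ := by
  funext ξ
  simp only [Mfun, indicator, mem_Ioo]
  split_ifs with h1 h2 h2
  · linarith [h1.1, h2.2]
  all_goals norm_num

lemma integrable_Mfun (L u : ℝ) : Integrable (Mfun u) (volume.restrict (Ioo (-L) L)) := by
  rw [Mfun_eq_indicator]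
  exact ((integrable_const (1 : ℝ)).indicator measurableSet_Ioo).sub
    ((integrable_const (1 : ℝ)).indicator measurableSet_Ioo)

lemma integral_Mfun {L u : ℝ} (h1 : -L ≤ u) (h2 : u ≤ L) :
    ∫ ξ in Ioo (-L) L, Mfun u ξ = u := by
  have hL : 0 ≤ L := by linarith
  rw [Mfun_eq_indicator, integral_sub ((integrable_const (1 : ℝ)).indicator measurableSet_Ioo)
    ((integrable_const (1 : ℝ)).indicator measurableSet_Ioo),
    setIntegral_indicator measurableSet_Ioo, setIntegral_indicator measurableSet_Ioo,
    inter_eq_right.2 (Ioo_subset_Ioo (by linarith) h2),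
    inter_eq_right.2 (Ioo_subset_Ioo h1 hL)]
  rcases le_total 0 u with h | h <;> simp [h]

theorem stmt1 (L : ℝ) (hL : 0 < L) (f : ℝ → ℝ) (hf : Measurable f)
    (hbd : ∀ᵐ ξ ∂(volume.restrict (Set.Ioo (-L) L)),
      0 ≤ Real.sign ξ * f ξ ∧ Real.sign ξ * f ξ ≤ 1)
    (φ : ℝ → ℝ) (hφ : ContDiff ℝ 1 φ) (hconv : ConvexOn ℝ Set.univ φ) :
    ∫ ξ in (-L)..L, deriv φ ξ * (proj L f ξ - f ξ) ≤ 0 := by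
  have hLL : -L ≤ L := by linarith
  -- The sign condition says nothing about `f 0`, so the null set `{0}` is discarded.
  have h0 : ∀ᵐ ξ ∂(volume.restrict (Ioo (-L) L)), ξ ≠ 0 :=
    ae_restrict_of_ae (Measure.ae_ne volume 0)
  have hmem : ∀ᵐ ξ ∂(volume.restrict (Ioo (-L) L)), ξ ∈ Ioo (-L) L :=
    ae_restrict_mem measurableSet_Ioo
  have hlow : ∀ᵐ ξ ∂(volume.restrict (Ioo (-L) L)), Mfun (-L) ξ ≤ f ξ := by
    filter_upwards [h0, hmem, hbd] with ξ a b c using Mfun_le_of_lt a b.1 c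
  have hup : ∀ᵐ ξ ∂(volume.restrict (Ioo (-L) L)), f ξ ≤ Mfun L ξ := by
    filter_upwards [h0, hmem, hbd] with ξ a b c using le_Mfun_of_lt a b.2 c
  have hfi : Integrable f (volume.restrict (Ioo (-L) L)) :=
    integrable_of_le_of_le hf.aestronglyMeasurable hlow hup
      (integrable_Mfun L (-L)) (integrable_Mfun L L)
  obtain ⟨u, hu⟩ : ∃ u, u = ∫ ζ in Ioo (-L) L, f ζ := ⟨_, rfl⟩
  have hu1 : -L ≤ u := by
    have := integral_mono_ae (integrable_Mfun L (-L)) hfi hlow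
    rwa [integral_Mfun le_rfl hLL, ← hu] at this
  have hu2 : u ≤ L := by
    have := integral_mono_ae hfi (integrable_Mfun L L) hup
    rwa [integral_Mfun hLL le_rfl, ← hu] at this
  have hp : proj L f = Mfun u := by
    funext ξ
    rw [proj, intervalIntegral.integral_of_le hLL, integral_Ioc_eq_integral_Ioo, ← hu]
  have hmono : Monotone (deriv φ) := fun x y hxy =>
    hconv.monotoneOn_deriv (fun x _ => (hφ.differentiable one_ne_zero) x)
      (mem_univ x) (mem_univ y) hxy
  have hgi : Integrable (fun ξ => Mfun u ξ - f ξ) (volume.restrict (Ioo (-L) L)) :=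
    (integrable_Mfun L u).sub hfi
  have hprod : Integrable (fun ξ => deriv φ ξ * (Mfun u ξ - f ξ))
      (volume.restrict (Ioo (-L) L)) := by
    refine hgi.bdd_mul (c := max |deriv φ (-L)| |deriv φ L|)
      hmono.measurable.aestronglyMeasurable ?_
    filter_upwards [hmem] with ξ hξ
    exact abs_le_max_abs_abs (hmono hξ.1.le) (hmono hξ.2.le)
  have hzero : ∫ ξ in Ioo (-L) L, (Mfun u ξ - f ξ) = 0 := by
    rw [integral_sub (integrable_Mfun L u) hfi, integral_Mfun hu1 hu2, ← hu, sub_self]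
  rw [hp, intervalIntegral.integral_of_le hLL, integral_Ioc_eq_integral_Ioo]
  calc ∫ ξ in Ioo (-L) L, deriv φ ξ * (Mfun u ξ - f ξ)
      ≤ ∫ ξ in Ioo (-L) L, deriv φ u * (Mfun u ξ - f ξ) := by
        refine integral_mono_ae hprod (hgi.const_mul _) ?_
        filter_upwards [h0, hbd] with ξ a c
        rcases lt_trichotomy ξ u with h | h | h
        · exact mul_le_mul_of_nonneg_right (hmono h.le) (sub_nonneg.2 (le_Mfun_of_lt a h c))
        · rw [h]
        · exact mul_le_mul_of_nonpos_right (hmono h.le) (sub_nonpos.2 (Mfun_le_of_lt a h c))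
    _ = 0 := by rw [integral_const_mul, hzero, mul_zero]
end

section
/- Let L > 0, let N ≥ 1, let O ⊆ ℝ^N be open, and let u ∈ L^∞(O) with |u(x)| ≤ L a.e. Let g_n : O × (−L, L) → ℝ be measurable functions with 0 ≤ sign(ξ)·g_n(x, ξ) ≤ 1 a.e. Assume that for every φ ∈ L¹(O × (−L, L)), ∫∫ g_n(x, ξ) φ(x, ξ) dx dξ → ∫∫ M(u(x), ξ) φ(x, ξ) dx dξ as n → ∞. Then for every compact set K ⊆ O × (−L, L), ∫_K |g_n(x, ξ) − M(u(x), ξ)| dx dξ → 0 as n → ∞. -/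
/-!
Since `sign ξ * g n x ξ` lies in `[0, 1]` and `sign ξ * M(u x, ξ)` is either `0` or `1`, that is, an
extreme point of this interval, the sign of `g n x ξ - M(u x, ξ)` does not depend on `n`: it is that
of `-sign ξ` where `M ≠ 0` and of `sign ξ` where `M = 0`. Hence `|g n - M| = (g n - M) * s` for a
fixed bounded measurable function `s` (`signWeight`, with `abs_sub_Mfun`), and weak convergence
tested against the indicator of `K` times `s` gives the strong convergence on `K`.
-/

open MeasureTheory Set Filter

/-- The function equal to `sign ξ` where `M(u, ξ) = 0` and to `-sign ξ` where `M(u, ξ) ≠ 0`,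
with the value of the sign at `0` taken to be `-1`. -/
noncomputable def signWeight (u ξ : ℝ) : ℝ :=
  (if 0 < ξ then 1 else -1) * (1 - 2 * |Mfun u ξ|)

theorem abs_sub_Mfun {u ξ g : ℝ} (hξ : ξ ≠ 0) (h0 : 0 ≤ Real.sign ξ * g)
    (h1 : Real.sign ξ * g ≤ 1) : |g - Mfun u ξ| = (g - Mfun u ξ) * signWeight u ξ := by
  unfold signWeight Mfun
  rcases lt_or_gt_of_ne hξ with h | h
  · rw [Real.sign_of_neg h] at h0 h1
    by_cases hu : u < ξ
    · simp only [h.not_gt, hu, h, false_and, and_self, if_true, if_false, abs_neg, abs_one]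
      rw [abs_of_nonneg (by linarith)]
      ring
    · simp only [h.not_gt, hu, false_and, if_false, abs_zero]
      rw [abs_of_nonpos (by linarith)]
      ring
  · rw [Real.sign_of_pos h] at h0 h1
    by_cases hu : ξ < u
    · simp only [h, hu, and_self, if_true, abs_one]
      rw [abs_of_nonpos (by linarith)]
      ring
    · simp only [h, hu, h.not_gt, and_false, if_true, if_false, abs_zero]
      rw [abs_of_nonneg (by linarith)]
      ring

theorem abs_le_one_of_sign {ξ g : ℝ} (hξ : ξ ≠ 0) (h0 : 0 ≤ Real.sign ξ * g)
    (h1 : Real.sign ξ * g ≤ 1) : |g| ≤ 1 := by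
  rw [abs_le]
  rcases lt_or_gt_of_ne hξ with h | h
  · rw [Real.sign_of_neg h] at h0 h1
    constructor <;> linarith
  · rw [Real.sign_of_pos h] at h0 h1
    constructor <;> linarith

theorem abs_Mfun_le (u ξ : ℝ) : |Mfun u ξ| ≤ 1 := by
  unfold Mfun
  split_ifs <;> simp

theorem abs_signWeight_le (u ξ : ℝ) : |signWeight u ξ| ≤ 1 := by
  have h := abs_Mfun_le u ξ
  have h' := abs_nonneg (Mfun u ξ)
  unfold signWeight
  rw [abs_le]
  split_ifs <;> constructor <;> linarith

theorem measurable_Mfun_comp {α : Type*} [MeasurableSpace α] {v w : α → ℝ} (hv : Measurable v)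
    (hw : Measurable w) : Measurable fun p => Mfun (v p) (w p) := by
  unfold Mfun
  refine Measurable.ite ?_ measurable_const (Measurable.ite ?_ measurable_const measurable_const)
  · exact (measurableSet_lt measurable_const hw).inter (measurableSet_lt hw hv)
  · exact (measurableSet_lt hv hw).inter (measurableSet_lt hw measurable_const)

theorem measurable_signWeight_comp {α : Type*} [MeasurableSpace α] {v w : α → ℝ}
    (hv : Measurable v) (hw : Measurable w) : Measurable fun p => signWeight (v p) (w p) := by
  unfold signWeight
  refine Measurable.mul
    (Measurable.ite (measurableSet_lt measurable_const hw) measurable_const measurable_const) ?_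
  exact measurable_const.sub (measurable_const.mul (measurable_Mfun_comp hv hw).abs)

theorem stmt4 (L : ℝ) (hL : 0 < L) (N : ℕ) (hN : 1 ≤ N)
    (O : Set (Fin N → ℝ)) (hO : IsOpen O)
    (u : (Fin N → ℝ) → ℝ) (hum : Measurable u)
    (huL : ∀ᵐ x ∂(volume.restrict O), |u x| ≤ L)
    (g : ℕ → (Fin N → ℝ) → ℝ → ℝ)
    (hgm : ∀ n, Measurable (Function.uncurry (g n)))
    (hgbd : ∀ n, ∀ᵐ p ∂((volume.restrict O).prod (volume.restrict (Set.Ioo (-L) L))),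
      0 ≤ Real.sign p.2 * g n p.1 p.2 ∧ Real.sign p.2 * g n p.1 p.2 ≤ 1)
    (hweak : ∀ φ : ((Fin N → ℝ) × ℝ) → ℝ,
      Integrable φ ((volume.restrict O).prod (volume.restrict (Set.Ioo (-L) L))) →
      Tendsto
        (fun n => ∫ p, g n p.1 p.2 * φ p
          ∂((volume.restrict O).prod (volume.restrict (Set.Ioo (-L) L))))
        atTop
        (nhds (∫ p, Mfun (u p.1) p.2 * φ p
          ∂((volume.restrict O).prod (volume.restrict (Set.Ioo (-L) L)))))) :
    ∀ K : Set ((Fin N → ℝ) × ℝ), IsCompact K → K ⊆ O ×ˢ Set.Ioo (-L) L →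
      Tendsto (fun n => ∫ p in K, |g n p.1 p.2 - Mfun (u p.1) p.2|) atTop (nhds 0) := by
  intro K hK hKsub
  set ν : Measure ((Fin N → ℝ) × ℝ) :=
    (volume.restrict O).prod (volume.restrict (Set.Ioo (-L) L)) with hν
  have hν' : ν = (volume : Measure ((Fin N → ℝ) × ℝ)).restrict (O ×ˢ Set.Ioo (-L) L) := by
    rw [hν, Measure.prod_restrict, Measure.volume_eq_prod]
  have hνK : ν.restrict K = (volume : Measure ((Fin N → ℝ) × ℝ)).restrict K := by
    rw [hν', Measure.restrict_restrict_of_subset hKsub]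
  have hKm : MeasurableSet K := hK.measurableSet
  have hne : ∀ᵐ p ∂ν, p.2 ≠ 0 := by
    have h : ∀ᵐ ξ ∂(volume.restrict (Set.Ioo (-L) L)), ξ ≠ (0 : ℝ) :=
      Measure.ae_ne _ _
    exact Measure.quasiMeasurePreserving_snd.ae h
  have hum1 : Measurable fun p : (Fin N → ℝ) × ℝ => u p.1 := hum.comp measurable_fst
  have hMm : Measurable fun p : (Fin N → ℝ) × ℝ => Mfun (u p.1) p.2 :=
    measurable_Mfun_comp hum1 measurable_snd
  have hsm : Measurable fun p : (Fin N → ℝ) × ℝ => signWeight (u p.1) p.2 :=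
    measurable_signWeight_comp hum1 measurable_snd
  have hgm' : ∀ n, Measurable fun p : (Fin N → ℝ) × ℝ => g n p.1 p.2 := hgm
  set φ : (Fin N → ℝ) × ℝ → ℝ := K.indicator fun p => signWeight (u p.1) p.2 with hφ
  have hφi : Integrable φ ν := by
    rw [hφ, integrable_indicator_iff hKm, IntegrableOn, hνK]
    refine Measure.integrableOn_of_bounded (M := 1) hK.measure_lt_top.ne
      hsm.aestronglyMeasurable ?_
    exact Eventually.of_forall fun p => abs_signWeight_le _ _
  have hMi : Integrable (fun p => Mfun (u p.1) p.2 * φ p) ν :=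
    hφi.bdd_mul hMm.aestronglyMeasurable (Eventually.of_forall fun p => abs_Mfun_le _ _)
  have hgi : ∀ n, Integrable (fun p => g n p.1 p.2 * φ p) ν := fun n => by
    refine hφi.bdd_mul (c := 1) (hgm' n).aestronglyMeasurable ?_
    filter_upwards [hne, hgbd n] with p hp hb
    exact abs_le_one_of_sign hp hb.1 hb.2
  have key : ∀ n, ∫ p in K, |g n p.1 p.2 - Mfun (u p.1) p.2|
      = ∫ p, g n p.1 p.2 * φ p ∂ν - ∫ p, Mfun (u p.1) p.2 * φ p ∂ν := fun n => by
    rw [← integral_sub (hgi n) hMi, ← hνK, ← integral_indicator hKm]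
    refine integral_congr_ae ?_
    filter_upwards [hne, hgbd n] with p hp hb
    by_cases hpK : p ∈ K
    · simp only [hφ, Set.indicator_of_mem hpK]
      rw [abs_sub_Mfun hp hb.1 hb.2, sub_mul]
    · simp [hφ, Set.indicator_of_notMem hpK]
  simp_rw [key]
  simpa using (hweak φ hφi).sub_const (∫ p, Mfun (u p.1) p.2 * φ p ∂ν)
end

section
/- Let L > 0 and let F : [0, ∞) × (−L, L) → ℝ be measurable with 0 ≤ sign(ξ)·F(y, ξ) ≤ 1 for all (y, ξ), such that for every ξ ∈ (−L, L) with ξ ≠ 0 the map y ↦ F(y, ξ) is continuous on [0, ∞), differentiable on (0, ∞), and satisfies ξ·∂_y F(y, ξ) = M(u(y), ξ) − F(y, ξ), where u(y) = ∫_{−L}^{L} F(y, ζ) dζ. If F(0, ξ) = 0 for every ξ ∈ (−L, 0), then F(y, ξ) = 0 for every y ≥ 0 and every ξ ∈ (−L, 0). -/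
open MeasureTheory Set Filter

/-!
For `ξ < 0` the Maxwellian is nonpositive, so `g z = F z ξ * exp (z / ξ)` satisfies
`g' z = M(u(z), ξ) / ξ * exp (z / ξ) ≥ 0`: it is nondecreasing on `[0, ∞)`. Since `g 0 = F 0 ξ = 0`,
this gives `F y ξ ≥ 0`, while the sign condition gives `F y ξ ≤ 0`. The value of `u` plays no role.
-/

theorem Mfun_nonpos_of_neg (u : ℝ) {ξ : ℝ} (hξ : ξ < 0) : Mfun u ξ ≤ 0 := by
  unfold Mfun
  rw [if_neg (fun h => lt_asymm h.1 hξ)]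
  split_ifs <;> norm_num

theorem stmt8 (L : ℝ) (hL : 0 < L) (F : ℝ → ℝ → ℝ)
    (hmeas : Measurable (Function.uncurry F))
    (hbd : ∀ y ξ, 0 ≤ y → ξ ∈ Set.Ioo (-L) L →
      0 ≤ Real.sign ξ * F y ξ ∧ Real.sign ξ * F y ξ ≤ 1)
    (hcont : ∀ ξ ∈ Set.Ioo (-L) L, ξ ≠ 0 → ContinuousOn (fun y => F y ξ) (Set.Ici 0))
    (heqn : ∀ ξ ∈ Set.Ioo (-L) L, ξ ≠ 0 → ∀ y : ℝ, 0 < y →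
      ∃ d : ℝ, HasDerivAt (fun z => F z ξ) d y ∧
        ξ * d = Mfun (∫ ζ in (-L)..L, F y ζ) ξ - F y ξ)
    (h0 : ∀ ξ ∈ Set.Ioo (-L) (0 : ℝ), F 0 ξ = 0) :
    ∀ y : ℝ, 0 ≤ y → ∀ ξ ∈ Set.Ioo (-L) (0 : ℝ), F y ξ = 0 := by
  intro y hy ξ hξ
  have hξ0 : ξ < 0 := hξ.2
  have hξL : ξ ∈ Set.Ioo (-L) L := ⟨hξ.1, hξ.2.trans hL⟩
  have hmono : MonotoneOn (fun z => F z ξ * Real.exp (z / ξ)) (Set.Ici 0) := by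
    have hderiv : ∀ z : ℝ, 0 < z → ∃ g' : ℝ, 0 ≤ g' ∧
        HasDerivAt (fun z => F z ξ * Real.exp (z / ξ)) g' z := by
      intro z hz
      obtain ⟨d, hd, heq⟩ := heqn ξ hξL hξ0.ne z hz
      refine ⟨_, ?_, hd.mul ((hasDerivAt_id z).div_const ξ).exp⟩
      have hM := Mfun_nonpos_of_neg (∫ ζ in (-L)..L, F z ζ) hξ0
      have hsum : d + F z ξ / ξ = Mfun (∫ ζ in (-L)..L, F z ζ) ξ / ξ := by
        have := hξ0.ne
        field_simp
        linarith
      calc (0 : ℝ) ≤ (d + F z ξ / ξ) * Real.exp (z / ξ) :=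
            mul_nonneg (hsum ▸ div_nonneg_of_nonpos hM hξ0.le) (Real.exp_pos _).le
        _ = _ := by simp only [id]; ring
    refine monotoneOn_of_deriv_nonneg (convex_Ici 0)
      ((hcont ξ hξL hξ0.ne).mul (by fun_prop)) ?_ ?_
    · intro z hz
      rw [interior_Ici] at hz
      obtain ⟨g', -, hg⟩ := hderiv z hz
      exact hg.differentiableAt.differentiableWithinAt
    · intro z hz
      rw [interior_Ici] at hz
      obtain ⟨g', hg', hg⟩ := hderiv z hz
      rwa [hg.deriv]
  have hle : 0 ≤ F y ξ * Real.exp (y / ξ) := by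
    simpa [h0 ξ hξ] using hmono (Set.mem_Ici.2 le_rfl) (Set.mem_Ici.2 hy) hy
  have hge : 0 ≤ F y ξ := nonneg_of_mul_nonneg_left hle (Real.exp_pos _)
  have hsign := (hbd y ξ hy hξL).1
  rw [Real.sign_of_neg hξ0] at hsign
  linarith
end
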